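/- An integer polynomial u is nilpotent at 4 (of some index) if and only if there exists p ∈ ℤ[X] such that u has one of the following forms, and in each case the index of nilpotency is as indicated: (1) u(x) = (x−4)p(x) (index 1); (2) u(x) = 3(x−3) + p(x)(x−3)(x−4) (index 2); (3) u(x) = −3(x−6) + p(x)(x−4)(x−6) (index 2); (4) u(x) = (x−2) + p(x)(x−2)(x−4) (index 2); (5) u(x) = −2(x−8) + p(x)(x−4)(x−8) (index 2); (6) u(x) = −5(x−5) + p(x)(x−4)(x−5) (index 2); (7) u(x) = (x−1) + p(x)(x−1)(x−2)(x−3)(x−4) (index 4); (8) u(x) = −(2x−13)(x−3) + p(x)(x−3)(x−4)(x−5)(x−6) (index 4). -/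

import Mathlib

/-!
Let `r n` be the orbit of `4` under `u`, stopping at `r m = 0`. Since `x - y ∣ u x - u y`, the
differences satisfy `r i - r j ∣ r (i + 1) - r (j + 1)`. Hence the steps `d i = r (i + 1) - r i`
form a divisibility chain, so `d i` divides `r i` (telescope up to `r m = 0`) and divides the last
step `-r (m - 1)`; moreover `r (m - 1) - 4 ∣ r 1`. The first fact gives `r 1 - 4 ∣ 4`, hence
`r 1 ∈ {0, 2, 3, 5, 6, 8}`, and the last one then leaves finitely many values for `r (m - 1)`, so
all steps divide an explicit integer `D`. Following the orbit from each value of `r 1` gives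
finitely many branches: each reaches `0`, violates a divisibility, repeats a value, or is an
arithmetic progression `4, 4 + d, 4 + 2 * d, …` with `d > 0`. For those the congruences
`k * d ∣ d n - d` with `k = 3, 4` together with `d n ∣ D` force the progression to go on forever
(`DvdOrbit.no_progression`), so that it never reaches `0`.

The purely arithmetical classification (`DvdOrbit.classify`) leaves, besides the orbits of the
statement, `4, 8, 12, 0` and `4, 6, 8, 10, 0`. These satisfy all pairwise divisibilities but are
not orbits of an integer polynomial: their divided differences of order `2` and `3` are not
integers. For the surviving orbits, `u` minus the indicated interpolant vanishes at the orbit, so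
it is a multiple of the product of the corresponding linear factors.
-/

open Polynomial

/-- `polyIter u n r` is the `n`-fold iterate `u^{(n)}(r)` of the integer polynomial `u` at `r`. -/
def polyIter (u : Polynomial ℤ) (n : ℕ) (r : ℤ) : ℤ := (fun x => u.eval x)^[n] r

/-- `u` is nilpotent at `r` of index `m`: `m` is the least positive integer with `u^{(m)}(r) = 0`. -/
def NilpotentAt (u : Polynomial ℤ) (r : ℤ) (m : ℕ) : Prop :=
  0 < m ∧ polyIter u m r = 0 ∧ ∀ n : ℕ, 0 < n → n < m → polyIter u n r ≠ 0

/-- A sequence which starts at `4`, first vanishes at index `m`, and has the divisibility property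
shared by all orbits of integer polynomials. -/
structure DvdOrbit (r : ℕ → ℤ) (m : ℕ) : Prop where
  start : r 0 = 4
  terminal : r m = 0
  ne : ∀ n, n < m → r n ≠ 0
  dvd : ∀ i j, r i - r j ∣ r (i + 1) - r (j + 1)

namespace DvdOrbit

variable {r : ℕ → ℤ} {m : ℕ}

lemma dvd_add (h : DvdOrbit r m) (i j k : ℕ) : r i - r j ∣ r (i + k) - r (j + k) := by
  induction k with
  | zero => simp
  | succ k ih => exact ih.trans (h.dvd _ _)

/-- A repeated value would make the sequence vanish before index `m`. -/
lemma inj (h : DvdOrbit r m) {i j : ℕ} (hij : i < j) (hj : j ≤ m) : r i ≠ r j := by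
  intro he
  have h1 := h.dvd_add i j (m - j)
  rw [he, sub_self, zero_dvd_iff, show j + (m - j) = m by omega, h.terminal, sub_zero] at h1
  exact h.ne _ (by omega) h1

lemma step_dvd_sub (h : DvdOrbit r m) (i k : ℕ) : r (i + 1) - r i ∣ r (i + k) - r i := by
  induction k with
  | zero => simp
  | succ k ih =>
    have h1 := h.dvd_add (i + 1) i k
    have h2 := _root_.dvd_add h1 ih
    rwa [show i + 1 + k = i + (k + 1) by omega, sub_add_sub_cancel] at h2

/-- Each step divides the point it leaves, because the later steps add up to minus that point. -/
lemma step_dvd (h : DvdOrbit r m) {i : ℕ} (hi : i < m) : r (i + 1) - r i ∣ r i := by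
  have h1 := h.step_dvd_sub i (m - i)
  rwa [show i + (m - i) = m by omega, h.terminal, zero_sub, dvd_neg] at h1

lemma step_dvd_last (h : DvdOrbit r m) {i : ℕ} (hi : i < m) : r (i + 1) - r i ∣ r (m - 1) := by
  have h1 := h.dvd_add (i + 1) i (m - 1 - i)
  rwa [show i + 1 + (m - 1 - i) = m by omega, show i + (m - 1 - i) = m - 1 by omega, h.terminal,
    zero_sub, dvd_neg] at h1

lemma last_dvd (h : DvdOrbit r m) (hm : 0 < m) : r (m - 1) - 4 ∣ r 1 := by
  have h1 := h.dvd (m - 1) 0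
  rwa [show m - 1 + 1 = m by omega, h.terminal, h.start, zero_add, zero_sub, dvd_neg] at h1

lemma lt_succ (h : DvdOrbit r m) {i : ℕ} (hi : i < m) (h0 : r (i + 1) ≠ 0) : i + 1 < m := by
  rcases Nat.lt_or_ge (i + 1) m with h1 | h1
  · exact h1
  · exact absurd (by rw [show i + 1 = m by omega]; exact h.terminal) h0

lemma eq_of_zero (h : DvdOrbit r m) {i : ℕ} (hi : i < m) (h0 : r (i + 1) = 0) : m = i + 1 := by
  by_contra hne
  exact h.ne (i + 1) (by omega) h0

/-- An orbit which begins as a long enough increasing arithmetic progression, and whose steps are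
constrained enough, continues as such and never reaches `0`. -/
lemma no_progression (h : DvdOrbit r m) {d : ℤ} (hd : 0 < d) (h4 : 4 < m)
    (h1 : ∀ n, n ≤ 4 → r n = 4 + n * d)
    (hx : ∀ n, n < m → 4 * d ∣ r (n + 1) - r n - d → 3 * d ∣ r (n + 1) - r n - d →
      r (n + 1) - r n = d) : False := by
  have key : ∀ n, n + 4 ≤ m → ∀ k, k ≤ 4 → r (n + k) = 4 + ((n + k : ℕ) : ℤ) * d := by
    intro n
    induction n with
    | zero => intro _ k hk; rw [zero_add]; exact h1 k hk
    | succ n ih =>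
      intro hn k hk
      have ih := ih (by omega)
      rcases Nat.lt_or_ge k 4 with hk4 | hk4
      · have := ih (k + 1) (by omega)
        rwa [show n + 1 + k = n + (k + 1) by omega]
      · obtain rfl : k = 4 := by omega
        have a0 := ih 0 (by omega)
        have a1 := ih 1 (by omega)
        have a2 := ih 2 (by omega)
        have a4 := ih 4 le_rfl
        have b1 := h.dvd (n + 4) (n + 0)
        have b2 := h.dvd (n + 4) (n + 1)
        rw [show n + 0 + 1 = n + 1 by omega, a0, a1, a4] at b1
        rw [show n + 1 + 1 = n + 2 by omega, a1, a2, a4] at b2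
        have c := hx (n + 4) (by omega) ?_ ?_
        · rw [show n + 1 + 4 = n + 4 + 1 by omega, eq_add_of_sub_eq c, a4]
          push_cast; ring
        · rw [a4]
          obtain ⟨t, ht⟩ := b1
          refine ⟨t - 1, ?_⟩
          push_cast at ht ⊢
          linear_combination ht
        · rw [a4]
          obtain ⟨t, ht⟩ := b2
          refine ⟨t - 1, ?_⟩
          push_cast at ht ⊢
          linear_combination ht
  have := key (m - 4) (by omega) 4 le_rfl
  rw [show m - 4 + 4 = m by omega, h.terminal] at this
  have : (0 : ℤ) ≤ (m : ℤ) * d := by positivity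
  omega

end DvdOrbit

/-- Bounds on a divisor, in a form ready for case analysis. -/
lemma bounds_of_dvd {x a : ℤ} (ha : 0 < a) (h : x ∣ a) : -a ≤ x ∧ x ≤ a := by
  have := Int.le_of_dvd ha h
  have := Int.le_of_dvd ha (neg_dvd.mpr h)
  constructor <;> omega

namespace DvdOrbit

variable {r : ℕ → ℤ} {m : ℕ}

lemma first_cases (h : DvdOrbit r m) (hm : 0 < m) :
    r 1 = 0 ∨ r 1 = 2 ∨ r 1 = 3 ∨ r 1 = 5 ∨ r 1 = 6 ∨ r 1 = 8 := by
  have h1 := h.step_dvd hm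
  rw [h.start, zero_add] at h1
  obtain ⟨x, hx⟩ : ∃ x, x = r 1 - 4 := ⟨_, rfl⟩
  rw [← hx] at h1
  obtain ⟨l, u⟩ := bounds_of_dvd (by norm_num) h1
  interval_cases x <;> (try simp only [Int.neg_dvd] at *) <;> omega

lemma from_two (h : DvdOrbit r m) (hm : 0 < m) (e1 : r 1 = 2) : m = 2 := by
  have m1 := h.lt_succ hm (by simp [e1])
  have i0 := h.inj (i := 0) (j := 2) (by omega) (by omega)
  have a := h.step_dvd m1
  have b := h.dvd 1 0
  simp only [zero_add, Nat.reduceAdd, h.start, e1, Int.reduceSub, Int.neg_dvd] at a b m1 i0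
  obtain ⟨x, hx⟩ : ∃ x, x = r 2 - 2 := ⟨_, rfl⟩
  rw [← hx] at a b
  obtain ⟨l, u⟩ := bounds_of_dvd (by norm_num) a
  have : r 2 = 0 := by interval_cases x <;> (try simp only [Int.neg_dvd] at *) <;> omega
  exact h.eq_of_zero m1 this

lemma from_three (h : DvdOrbit r m) (hm : 0 < m) (e1 : r 1 = 3) :
    m = 2 ∨ m = 4 ∧ r 2 = 2 ∧ r 3 = 1 := by
  have m1 := h.lt_succ hm (by simp [e1])
  by_cases e2 : r 2 = 0
  · exact Or.inl (h.eq_of_zero m1 e2)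
  right
  have m2 := h.lt_succ m1 e2
  simp only [zero_add, Nat.reduceAdd] at m1 m2
  -- the last nonzero term is `1`, `5` or `7`
  have hD : r (m - 1) ∣ 35 := by
    have a := h.last_dvd hm
    have i := h.inj (i := 1) (j := m - 1) (by omega) (by omega)
    rw [e1] at a i
    obtain ⟨x, hx⟩ : ∃ x, x = r (m - 1) - 4 := ⟨_, rfl⟩
    rw [← hx] at a
    obtain ⟨l, u⟩ := bounds_of_dvd (by norm_num) a
    rw [show r (m - 1) = x + 4 by omega] at i ⊢
    interval_cases x <;> (try decide) <;> (try simp only [Int.neg_dvd] at *) <;> omega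
  have s1 := h.step_dvd m1
  have t1 := (h.step_dvd_last m1).trans hD
  have i1 := h.inj (i := 0) (j := 2) (by omega) (by omega)
  simp only [Nat.reduceAdd, h.start, e1] at s1 t1 i1
  have e2 : r 2 = 2 := by
    obtain ⟨x, hx⟩ : ∃ x, x = r 2 - 3 := ⟨_, rfl⟩
    rw [← hx] at s1 t1
    obtain ⟨l, u⟩ := bounds_of_dvd (by norm_num) s1
    interval_cases x <;> (try simp only [Int.neg_dvd] at *) <;> omega
  have s2 := h.step_dvd m2
  have t2 := (h.step_dvd_last m2).trans hD
  have i2 := h.inj (i := 1) (j := 3) (by omega) (by omega)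
  simp only [Nat.reduceAdd, e1, e2] at s2 t2 i2
  have e3 : r 3 = 1 := by
    obtain ⟨x, hx⟩ : ∃ x, x = r 3 - 2 := ⟨_, rfl⟩
    rw [← hx] at s2 t2
    obtain ⟨l, u⟩ := bounds_of_dvd (by norm_num) s2
    interval_cases x <;> (try simp only [Int.neg_dvd] at *) <;> omega
  have m3 := h.lt_succ m2 (by simp [e3])
  have s3 := h.step_dvd m3
  have i3 := h.inj (i := 2) (j := 4) (by omega) (by omega)
  simp only [Nat.reduceAdd, e2, e3] at s3 i3 m3
  have e4 : r 4 = 0 := by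
    obtain ⟨x, hx⟩ : ∃ x, x = r 4 - 1 := ⟨_, rfl⟩
    rw [← hx] at s3
    obtain ⟨l, u⟩ := bounds_of_dvd (by norm_num) s3
    interval_cases x <;> (try simp only [Int.neg_dvd] at *) <;> omega
  exact ⟨h.eq_of_zero m3 e4, e2, e3⟩

lemma from_five (h : DvdOrbit r m) (hm : 0 < m) (e1 : r 1 = 5) :
    m = 2 ∨ m = 4 ∧ r 2 = 6 ∧ r 3 = 3 := by
  have m1 := h.lt_succ hm (by simp [e1])
  by_cases e2 : r 2 = 0
  · exact Or.inl (h.eq_of_zero m1 e2)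
  right
  have m2 := h.lt_succ m1 e2
  simp only [zero_add, Nat.reduceAdd] at m1 m2
  -- the last nonzero term is `-1`, `3` or `9`
  have hD : r (m - 1) ∣ 9 := by
    have a := h.last_dvd hm
    have i := h.inj (i := 1) (j := m - 1) (by omega) (by omega)
    rw [e1] at a i
    obtain ⟨x, hx⟩ : ∃ x, x = r (m - 1) - 4 := ⟨_, rfl⟩
    rw [← hx] at a
    obtain ⟨l, u⟩ := bounds_of_dvd (by norm_num) a
    rw [show r (m - 1) = x + 4 by omega] at i ⊢
    interval_cases x <;> (try decide) <;> (try simp only [Int.neg_dvd] at *) <;> omega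
  have s1 := h.step_dvd m1
  have t1 := (h.step_dvd_last m1).trans hD
  have i1 := h.inj (i := 0) (j := 2) (by omega) (by omega)
  simp only [Nat.reduceAdd, h.start, e1] at s1 t1 i1
  have e2 : r 2 = 6 := by
    obtain ⟨x, hx⟩ : ∃ x, x = r 2 - 5 := ⟨_, rfl⟩
    rw [← hx] at s1 t1
    obtain ⟨l, u⟩ := bounds_of_dvd (by norm_num) s1
    interval_cases x <;> (try simp only [Int.neg_dvd] at *) <;> omega
  have s2 := h.step_dvd m2
  have t2 := (h.step_dvd_last m2).trans hD
  have i2 := h.inj (i := 1) (j := 3) (by omega) (by omega)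
  simp only [Nat.reduceAdd, e1, e2] at s2 t2 i2
  have e3 : r 3 = 3 ∨ r 3 = 7 ∨ r 3 = 9 := by
    obtain ⟨x, hx⟩ : ∃ x, x = r 3 - 6 := ⟨_, rfl⟩
    rw [← hx] at s2 t2
    obtain ⟨l, u⟩ := bounds_of_dvd (by norm_num) s2
    interval_cases x <;> (try simp only [Int.neg_dvd] at *) <;> omega
  have m3 := h.lt_succ m2 (by simp only [Nat.reduceAdd]; omega)
  simp only [Nat.reduceAdd] at m3
  have s3 := h.step_dvd m3
  have t3 := (h.step_dvd_last m3).trans hD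
  have i3 := h.inj (i := 2) (j := 4) (by omega) (by omega)
  have p0 := h.dvd 3 0
  have p1 := h.dvd 3 1
  have p2 := h.dvd 3 2
  simp only [Nat.reduceAdd, zero_add, h.start, e1, e2] at s3 t3 i3 p0 p1 p2
  obtain ⟨l, u⟩ := bounds_of_dvd (by norm_num) t3
  rcases e3 with e3 | e3 | e3
  · simp only [e3, Int.reduceSub, Int.neg_dvd] at s3 t3 p0 p1 p2 l u
    have e4 : r 4 = 0 := by
      obtain ⟨x, hx⟩ : ∃ x, x = r 4 - 3 := ⟨_, rfl⟩
      rw [← hx] at s3 l u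
      rw [show r 4 - 6 = x - 3 by omega] at p1
      interval_cases x <;> (try simp only [Int.neg_dvd] at *) <;> omega
    exact ⟨h.eq_of_zero m3 e4, e2, e3⟩
  · exfalso
    rw [e3] at s3 t3 p0 p1 p2 l u
    have e4 : r 4 = 8 := by
      obtain ⟨x, hx⟩ : ∃ x, x = r 4 - 7 := ⟨_, rfl⟩
      rw [← hx] at s3 t3 l u
      interval_cases x <;> (try simp only [Int.neg_dvd] at *) <;> omega
    have m4 := h.lt_succ m3 (by simp [e4])
    refine h.no_progression (d := 1) (by norm_num) m4 ?_ ?_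
    · intro n hn
      interval_cases n <;> simp [h.start, e1, e2, e3, e4]
    · intro n hn c4 c3
      have t := (h.step_dvd_last hn).trans hD
      obtain ⟨x, hx⟩ : ∃ x, x = r (n + 1) - r n := ⟨_, rfl⟩
      rw [← hx] at c4 c3 t ⊢
      obtain ⟨l, u⟩ := bounds_of_dvd (by norm_num) t
      interval_cases x <;> (try decide) <;> (try simp only [Int.neg_dvd] at *) <;> omega
  · exfalso
    rw [e3] at s3 t3 p0 p1 p2 l u
    obtain ⟨x, hx⟩ : ∃ x, x = r 4 - 9 := ⟨_, rfl⟩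
    rw [show r 4 - 6 = x + 3 by omega] at p1
    rw [show r 4 - 5 = x + 4 by omega] at p0
    rw [← hx] at t3 l u
    interval_cases x <;> (try simp only [Int.neg_dvd] at *) <;> omega

lemma from_six (h : DvdOrbit r m) (hm : 0 < m) (e1 : r 1 = 6) :
    m = 2 ∨ m = 4 ∧ r 2 = 8 ∧ r 3 = 10 := by
  have m1 := h.lt_succ hm (by simp [e1])
  by_cases e2 : r 2 = 0
  · exact Or.inl (h.eq_of_zero m1 e2)
  right
  have m2 := h.lt_succ m1 e2
  simp only [zero_add, Nat.reduceAdd] at m1 m2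
  -- the last nonzero term is even, hence `-2`, `2` or `10`
  have hD : r (m - 1) ∣ 10 := by
    have a := h.last_dvd hm
    have b := h.step_dvd_last hm
    have i := h.inj (i := 1) (j := m - 1) (by omega) (by omega)
    rw [e1] at a i
    rw [zero_add, e1, h.start] at b
    obtain ⟨x, hx⟩ : ∃ x, x = r (m - 1) - 4 := ⟨_, rfl⟩
    rw [← hx] at a
    obtain ⟨l, u⟩ := bounds_of_dvd (by norm_num) a
    rw [show r (m - 1) = x + 4 by omega] at b i ⊢
    interval_cases x <;> (try decide) <;> (try simp only [Int.neg_dvd] at *) <;> omega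
  have s1 := h.step_dvd m1
  have t1 := (h.step_dvd_last m1).trans hD
  have p1 := h.dvd 1 0
  have i1 := h.inj (i := 0) (j := 2) (by omega) (by omega)
  simp only [Nat.reduceAdd, zero_add, h.start, e1] at s1 t1 i1 p1
  have e2 : r 2 = 8 := by
    obtain ⟨x, hx⟩ : ∃ x, x = r 2 - 6 := ⟨_, rfl⟩
    rw [← hx] at s1 t1 p1
    obtain ⟨l, u⟩ := bounds_of_dvd (by norm_num) s1
    interval_cases x <;> (try simp only [Int.neg_dvd] at *) <;> omega
  have s2 := h.step_dvd m2
  have t2 := (h.step_dvd_last m2).trans hD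
  have p2 := h.dvd 2 1
  have i2 := h.inj (i := 1) (j := 3) (by omega) (by omega)
  simp only [Nat.reduceAdd, e1, e2] at s2 t2 i2 p2
  have e3 : r 3 = 10 := by
    obtain ⟨x, hx⟩ : ∃ x, x = r 3 - 8 := ⟨_, rfl⟩
    rw [← hx] at s2 t2 p2
    obtain ⟨l, u⟩ := bounds_of_dvd (by norm_num) s2
    interval_cases x <;> (try simp only [Int.neg_dvd] at *) <;> omega
  have m3 := h.lt_succ m2 (by simp [e3])
  simp only [Nat.reduceAdd] at m3
  have t3 := (h.step_dvd_last m3).trans hD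
  have p3 := h.dvd 3 2
  have p0 := h.dvd 3 0
  have i3 := h.inj (i := 2) (j := 4) (by omega) (by omega)
  simp only [Nat.reduceAdd, zero_add, h.start, e1, e2, e3] at t3 i3 p3 p0
  have e4 : r 4 = 0 ∨ r 4 = 12 := by
    obtain ⟨x, hx⟩ : ∃ x, x = r 4 - 10 := ⟨_, rfl⟩
    rw [show r 4 - 6 = x + 4 by omega] at p0
    rw [← hx] at t3 p3
    obtain ⟨l, u⟩ := bounds_of_dvd (by norm_num) t3
    interval_cases x <;> (try simp only [Int.neg_dvd] at *) <;> omega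
  rcases e4 with e4 | e4
  · exact ⟨h.eq_of_zero m3 e4, e2, e3⟩
  · exfalso
    have m4 := h.lt_succ m3 (by simp [e4])
    refine h.no_progression (d := 2) (by norm_num) m4 ?_ ?_
    · intro n hn
      interval_cases n <;> simp [h.start, e1, e2, e3, e4]
    · intro n hn c4 c3
      have t := (h.step_dvd_last hn).trans hD
      obtain ⟨x, hx⟩ : ∃ x, x = r (n + 1) - r n := ⟨_, rfl⟩
      rw [← hx] at c4 c3 t ⊢
      obtain ⟨l, u⟩ := bounds_of_dvd (by norm_num) t
      interval_cases x <;> (try decide) <;> (try simp only [Int.neg_dvd] at *) <;> omega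

lemma from_eight (h : DvdOrbit r m) (hm : 0 < m) (e1 : r 1 = 8) :
    m = 2 ∨ m = 3 ∧ r 2 = 12 := by
  have m1 := h.lt_succ hm (by simp [e1])
  by_cases e2 : r 2 = 0
  · exact Or.inl (h.eq_of_zero m1 e2)
  right
  have m2 := h.lt_succ m1 e2
  simp only [zero_add, Nat.reduceAdd] at m1 m2
  -- the last nonzero term is a multiple of `4`, hence `-4` or `12`
  have hD : r (m - 1) ∣ 12 := by
    have a := h.last_dvd hm
    have b := h.step_dvd_last hm
    have i := h.inj (i := 1) (j := m - 1) (by omega) (by omega)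
    have z := h.ne (m - 1) (by omega)
    rw [e1] at a i
    rw [zero_add, e1, h.start] at b
    obtain ⟨x, hx⟩ : ∃ x, x = r (m - 1) - 4 := ⟨_, rfl⟩
    rw [← hx] at a
    obtain ⟨l, u⟩ := bounds_of_dvd (by norm_num) a
    rw [show r (m - 1) = x + 4 by omega] at b i z ⊢
    interval_cases x <;> (try decide) <;> (try simp only [Int.neg_dvd] at *) <;> omega
  have s1 := h.step_dvd m1
  have p1 := h.dvd 1 0
  have t1 := (h.step_dvd_last m1).trans hD
  have i1 := h.inj (i := 0) (j := 2) (by omega) (by omega)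
  simp only [Nat.reduceAdd, zero_add, h.start, e1] at s1 t1 i1 p1
  have e2 : r 2 = 12 := by
    obtain ⟨x, hx⟩ : ∃ x, x = r 2 - 8 := ⟨_, rfl⟩
    rw [← hx] at s1 t1 p1
    obtain ⟨l, u⟩ := bounds_of_dvd (by norm_num) s1
    interval_cases x <;> (try simp only [Int.neg_dvd] at *) <;> omega
  have t2 := (h.step_dvd_last m2).trans hD
  have p2 := h.dvd 2 1
  have i2 := h.inj (i := 1) (j := 3) (by omega) (by omega)
  simp only [Nat.reduceAdd, e1, e2] at t2 i2 p2
  have e3 : r 3 = 0 ∨ r 3 = 16 ∨ r 3 = 24 := by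
    obtain ⟨x, hx⟩ : ∃ x, x = r 3 - 12 := ⟨_, rfl⟩
    rw [← hx] at t2 p2
    obtain ⟨l, u⟩ := bounds_of_dvd (by norm_num) t2
    interval_cases x <;> (try simp only [Int.neg_dvd] at *) <;> omega
  by_cases z3 : r 3 = 0
  · exact ⟨h.eq_of_zero m2 z3, e2⟩
  exfalso
  have m3 := h.lt_succ m2 z3
  simp only [Nat.reduceAdd] at m3
  have s3 := h.step_dvd m3
  have t3 := (h.step_dvd_last m3).trans hD
  have p3 := h.dvd 3 2
  have p1 := h.dvd 3 1
  have i3 := h.inj (i := 2) (j := 4) (by omega) (by omega)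
  simp only [Nat.reduceAdd, e1, e2] at s3 t3 i3 p3 p1
  obtain ⟨l, u⟩ := bounds_of_dvd (by norm_num) t3
  rcases e3 with e3 | e3 | e3
  · exact z3 e3
  · rw [e3] at s3 t3 p3 p1 l u
    have e4 : r 4 = 20 := by
      obtain ⟨x, hx⟩ : ∃ x, x = r 4 - 16 := ⟨_, rfl⟩
      rw [← hx] at s3 t3 p3 l u
      interval_cases x <;> (try simp only [Int.neg_dvd] at *) <;> omega
    have m4 := h.lt_succ m3 (by simp [e4])
    refine h.no_progression (d := 4) (by norm_num) m4 ?_ ?_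
    · intro n hn
      interval_cases n <;> simp [h.start, e1, e2, e3, e4]
    · intro n hn c4 c3
      have t := (h.step_dvd_last hn).trans hD
      obtain ⟨x, hx⟩ : ∃ x, x = r (n + 1) - r n := ⟨_, rfl⟩
      rw [← hx] at c4 c3 t ⊢
      obtain ⟨l, u⟩ := bounds_of_dvd (by norm_num) t
      interval_cases x <;> (try decide) <;> (try simp only [Int.neg_dvd] at *) <;> omega
  · rw [e3] at s3 t3 p3 p1 l u
    obtain ⟨x, hx⟩ : ∃ x, x = r 4 - 24 := ⟨_, rfl⟩
    rw [show r 4 - 12 = x + 12 by omega] at p1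
    rw [← hx] at t3 p3 l u
    interval_cases x <;> (try simp only [Int.neg_dvd] at *) <;> omega

/-- The orbits allowed by pairwise divisibility alone. -/
lemma classify (h : DvdOrbit r m) (hm : 0 < m) :
    m = 1 ∨
    (m = 2 ∧ (r 1 = 2 ∨ r 1 = 3 ∨ r 1 = 5 ∨ r 1 = 6 ∨ r 1 = 8)) ∨
    (m = 3 ∧ r 1 = 8 ∧ r 2 = 12) ∨
    (m = 4 ∧ ((r 1 = 3 ∧ r 2 = 2 ∧ r 3 = 1) ∨ (r 1 = 5 ∧ r 2 = 6 ∧ r 3 = 3) ∨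
      (r 1 = 6 ∧ r 2 = 8 ∧ r 3 = 10))) := by
  rcases h.first_cases hm with e | e | e | e | e | e
  · exact Or.inl (h.eq_of_zero hm e)
  · have := h.from_two hm e; omega
  · have := h.from_three hm e; omega
  · have := h.from_five hm e; omega
  · have := h.from_six hm e; omega
  · have := h.from_eight hm e; omega

end DvdOrbit

lemma exists_factor_one {q : ℤ[X]} {a : ℤ} (ha : q.eval a = 0) : ∃ p, q = (X - C a) * p :=
  dvd_iff_isRoot.mpr ha

lemma exists_factor_two {q : ℤ[X]} {a b : ℤ} (hab : a ≠ b) (ha : q.eval a = 0)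
    (hb : q.eval b = 0) : ∃ p, q = (X - C a) * (X - C b) * p := by
  obtain ⟨s, rfl⟩ := exists_factor_one ha
  rw [eval_mul, mul_eq_zero, eval_sub, eval_X, eval_C] at hb
  obtain ⟨p, rfl⟩ := exists_factor_one (hb.resolve_left (by omega))
  exact ⟨p, by ring⟩

lemma exists_factor_three {q : ℤ[X]} {a b c : ℤ} (hab : a ≠ b) (hac : a ≠ c) (hbc : b ≠ c)
    (ha : q.eval a = 0) (hb : q.eval b = 0) (hc : q.eval c = 0) :
    ∃ p, q = (X - C a) * (X - C b) * (X - C c) * p := by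
  obtain ⟨s, rfl⟩ := exists_factor_two hab ha hb
  simp only [eval_mul, mul_eq_zero, eval_sub, eval_X, eval_C] at hc
  obtain ⟨p, rfl⟩ := exists_factor_one (hc.resolve_left (by omega))
  exact ⟨p, by ring⟩

lemma exists_factor_four {q : ℤ[X]} {a b c d : ℤ} (hab : a ≠ b) (hac : a ≠ c) (had : a ≠ d)
    (hbc : b ≠ c) (hbd : b ≠ d) (hcd : c ≠ d) (ha : q.eval a = 0) (hb : q.eval b = 0)
    (hc : q.eval c = 0) (hd : q.eval d = 0) :
    ∃ p, q = (X - C a) * (X - C b) * (X - C c) * (X - C d) * p := by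
  obtain ⟨s, rfl⟩ := exists_factor_three hab hac hbc ha hb hc
  simp only [eval_mul, mul_eq_zero, eval_sub, eval_X, eval_C] at hd
  obtain ⟨p, rfl⟩ := exists_factor_one (hd.resolve_left (by omega))
  exact ⟨p, by ring⟩

lemma polyIter_succ (u : ℤ[X]) (n : ℕ) (x : ℤ) :
    polyIter u (n + 1) x = u.eval (polyIter u n x) :=
  Function.iterate_succ_apply' _ _ _

lemma NilpotentAt.dvdOrbit {u : ℤ[X]} {m : ℕ} (h : NilpotentAt u 4 m) :
    DvdOrbit (fun n => polyIter u n 4) m where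
  start := rfl
  terminal := h.2.1
  ne n hn := by
    rcases Nat.eq_zero_or_pos n with rfl | h0
    · exact four_ne_zero
    · exact h.2.2 n h0 hn
  dvd i j := by
    simp only [polyIter_succ]
    exact sub_dvd_eval_sub _ _ _

/-- The divided difference of order `2` at `4, 8, 12` is `-1 / 2`. -/
lemma no_orbit_three {u : ℤ[X]} (h0 : u.eval 4 = 8) (h1 : u.eval 8 = 12) (h2 : u.eval 12 = 0) :
    False := by
  obtain ⟨p, hp⟩ := exists_factor_two (q := u - (X + 4)) (a := 4) (b := 8) (by norm_num)
    (by simp [h0]) (by simp [h1])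
  have := congrArg (eval 12) hp
  simp [h2] at this
  omega

/-- The divided difference of order `3` at `4, 6, 8, 10` is `-1 / 4`. -/
lemma no_orbit_four {u : ℤ[X]} (h0 : u.eval 4 = 6) (h1 : u.eval 6 = 8) (h2 : u.eval 8 = 10)
    (h3 : u.eval 10 = 0) : False := by
  obtain ⟨p, hp⟩ := exists_factor_three (q := u - (X + 2)) (a := 4) (b := 6) (c := 8)
    (by norm_num) (by norm_num) (by norm_num) (by simp [h0]) (by simp [h1]) (by simp [h2])
  have := congrArg (eval 10) hp
  simp [h3] at this
  omega

theorem stmt_12 (u : Polynomial ℤ) :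
    (∃ m : ℕ, NilpotentAt u 4 m) ↔
      ∃ p : Polynomial ℤ,
        (u = (X - 4) * p ∧ NilpotentAt u 4 1) ∨
        (u = 3 * (X - 3) + p * (X - 3) * (X - 4) ∧ NilpotentAt u 4 2) ∨
        (u = -3 * (X - 6) + p * (X - 4) * (X - 6) ∧ NilpotentAt u 4 2) ∨
        (u = (X - 2) + p * (X - 2) * (X - 4) ∧ NilpotentAt u 4 2) ∨
        (u = -2 * (X - 8) + p * (X - 4) * (X - 8) ∧ NilpotentAt u 4 2) ∨
        (u = -5 * (X - 5) + p * (X - 4) * (X - 5) ∧ NilpotentAt u 4 2) ∨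
        (u = (X - 1) + p * (X - 1) * (X - 2) * (X - 3) * (X - 4) ∧ NilpotentAt u 4 4) ∨
        (u = -((2 * X - 13) * (X - 3)) + p * (X - 3) * (X - 4) * (X - 5) * (X - 6) ∧
          NilpotentAt u 4 4) := by
  constructor
  · rintro ⟨m, h⟩
    have e0 : polyIter u 1 4 = u.eval 4 := rfl
    have e1 : polyIter u 2 4 = u.eval (polyIter u 1 4) := polyIter_succ u 1 4
    have e2 : polyIter u 3 4 = u.eval (polyIter u 2 4) := polyIter_succ u 2 4
    have e3 : polyIter u 4 4 = u.eval (polyIter u 3 4) := polyIter_succ u 3 4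
    have hs := h.2.1
    rcases h.dvdOrbit.classify h.1 with rfl | ⟨rfl, a | a | a | a | a⟩ | ⟨rfl, a, b⟩ |
      ⟨rfl, ⟨a, b, c⟩ | ⟨a, b, c⟩ | ⟨a, b, c⟩⟩
    · rw [e0] at hs
      obtain ⟨p, hp⟩ := exists_factor_one hs
      exact ⟨p, Or.inl ⟨hp, h⟩⟩
    · rw [e1, a] at hs
      rw [e0] at a
      obtain ⟨p, hp⟩ := exists_factor_two (q := u - (X - 2)) (a := 2) (b := 4) (by norm_num)
        (by simp [hs]) (by simp [a])
      refine ⟨p, Or.inr <| Or.inr <| Or.inr <| Or.inl ⟨?_, h⟩⟩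
      simp only [map_ofNat] at hp
      linear_combination hp
    · rw [e1, a] at hs
      rw [e0] at a
      obtain ⟨p, hp⟩ := exists_factor_two (q := u - 3 * (X - 3)) (a := 3) (b := 4) (by norm_num)
        (by simp [hs]) (by simp [a])
      refine ⟨p, Or.inr <| Or.inl ⟨?_, h⟩⟩
      simp only [map_ofNat] at hp
      linear_combination hp
    · rw [e1, a] at hs
      rw [e0] at a
      obtain ⟨p, hp⟩ := exists_factor_two (q := u - -5 * (X - 5)) (a := 4) (b := 5)
        (by norm_num) (by simp [a]) (by simp [hs])
      refine ⟨p, Or.inr <| Or.inr <| Or.inr <| Or.inr <| Or.inr <| Or.inl ⟨?_, h⟩⟩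
      simp only [map_ofNat] at hp
      linear_combination hp
    · rw [e1, a] at hs
      rw [e0] at a
      obtain ⟨p, hp⟩ := exists_factor_two (q := u - -3 * (X - 6)) (a := 4) (b := 6)
        (by norm_num) (by simp [a]) (by simp [hs])
      refine ⟨p, Or.inr <| Or.inr <| Or.inl ⟨?_, h⟩⟩
      simp only [map_ofNat] at hp
      linear_combination hp
    · rw [e1, a] at hs
      rw [e0] at a
      obtain ⟨p, hp⟩ := exists_factor_two (q := u - -2 * (X - 8)) (a := 4) (b := 8)
        (by norm_num) (by simp [a]) (by simp [hs])
      refine ⟨p, Or.inr <| Or.inr <| Or.inr <| Or.inr <| Or.inl ⟨?_, h⟩⟩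
      simp only [map_ofNat] at hp
      linear_combination hp
    · rw [e2, b] at hs
      rw [e1, a] at b
      exact (no_orbit_three a b hs).elim
    · rw [e3, c] at hs
      rw [e2, b] at c
      rw [e1, a] at b
      rw [e0] at a
      obtain ⟨p, hp⟩ := exists_factor_four (q := u - (X - 1)) (a := 1) (b := 2) (c := 3) (d := 4)
        (by norm_num) (by norm_num) (by norm_num) (by norm_num) (by norm_num) (by norm_num)
        (by simp [hs]) (by simp [c]) (by simp [b]) (by simp [a])
      refine ⟨p, Or.inr <| Or.inr <| Or.inr <| Or.inr <| Or.inr <| Or.inr <| Or.inl ⟨?_, h⟩⟩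
      simp only [map_ofNat, map_one] at hp
      linear_combination hp
    · rw [e3, c] at hs
      rw [e2, b] at c
      rw [e1, a] at b
      rw [e0] at a
      obtain ⟨p, hp⟩ := exists_factor_four (q := u - -((2 * X - 13) * (X - 3))) (a := 3) (b := 4)
        (c := 5) (d := 6)
        (by norm_num) (by norm_num) (by norm_num) (by norm_num) (by norm_num) (by norm_num)
        (by simp [hs]) (by simp [a]) (by simp [b]) (by simp [c])
      refine ⟨p, Or.inr <| Or.inr <| Or.inr <| Or.inr <| Or.inr <| Or.inr <| Or.inr ⟨?_, h⟩⟩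
      simp only [map_ofNat] at hp
      linear_combination hp
    · rw [e3, c] at hs
      rw [e2, b] at c
      rw [e1, a] at b
      exact (no_orbit_four a b c hs).elim
  · rintro ⟨p, ⟨_, h⟩ | ⟨_, h⟩ | ⟨_, h⟩ | ⟨_, h⟩ | ⟨_, h⟩ | ⟨_, h⟩ | ⟨_, h⟩ | ⟨_, h⟩⟩ <;>
      exact ⟨_, h⟩
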